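/- Let q > 3 be a prime and a ∈ 𝔽_q nonzero. Then there exists (α, β) ∈ 𝔽_q² with (α+β)^3 - 9αβ^2 = a. -/

import Mathlib

section helpers
open Classical

variable {F : Type*} [Field F] [Fintype F]

/-- additive convolution -/
noncomputable def cv (f h : F → ℤ) (z : F) : ℤ := ∑ x, f x * h (z - x)

/-- indicator of the coset of nonzero cubes of `c` -/
noncomputable def ec (c x : F) : ℤ := if x ≠ 0 ∧ ∃ t, x = c * t ^ 3 then 1 else 0

lemma cv_comm (f h : F → ℤ) (z : F) : cv f h z = cv h f z := by
  unfold cv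
  rw [← Equiv.sum_comp (Equiv.subLeft z)]
  apply Finset.sum_congr rfl
  intro x _
  simp [mul_comm]

lemma cv_assoc (f h k : F → ℤ) (z : F) : cv (cv f h) k z = cv f (cv h k) z := by
  unfold cv
  simp only [Finset.sum_mul, Finset.mul_sum]
  rw [Finset.sum_comm]
  apply Finset.sum_congr rfl
  intro y _
  rw [← Equiv.sum_comp (Equiv.addRight y)]
  apply Finset.sum_congr rfl
  intro x _
  simp only [Equiv.coe_addRight, add_sub_cancel_right]
  rw [mul_assoc, show z - (x + y) = z - y - x by ring]

lemma cv_lin (a b : ℤ) (f h k : F → ℤ) (z : F) :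
    cv (fun x => a * f x + b * h x) k z = a * cv f k z + b * cv h k z := by
  unfold cv
  simp only [Finset.mul_sum, ← Finset.sum_add_distrib]
  apply Finset.sum_congr rfl
  intro x _
  ring

lemma cv_scale (f h : F → ℤ) (k : F) (hk : k ≠ 0) (z : F) :
    cv f h (k * z) = cv (fun x => f (k * x)) (fun x => h (k * x)) z := by
  unfold cv
  rw [← Equiv.sum_comp (Equiv.mulLeft₀ k hk)]
  apply Finset.sum_congr rfl
  intro x _
  simp [mul_sub]

lemma ec_mul (c k x : F) (hk : k ≠ 0) : ec (k * c) (k * x) = ec c x := by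
  unfold ec
  simp [hk, mul_assoc]

lemma ec_cube (c t x : F) (ht : t ≠ 0) : ec c (t ^ 3 * x) = ec c x := by
  unfold ec
  congr 1
  simp only [eq_iff_iff]
  constructor
  · rintro ⟨h, s, hs⟩
    refine ⟨fun h0 => h (by simp [h0]), s / t, ?_⟩
    field_simp
    linear_combination hs
  · rintro ⟨h, s, rfl⟩
    refine ⟨mul_ne_zero (pow_ne_zero _ ht) h, s * t, by ring⟩

lemma ec_cube' (c t x : F) (ht : t ≠ 0) : ec (t ^ 3 * c) x = ec c x := by
  rw [← ec_cube _ t x ht, ec_mul _ _ _ (pow_ne_zero _ ht)]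

lemma ec_nonneg (c x : F) : 0 ≤ ec c x := by
  unfold ec; split_ifs <;> simp

lemma cv_ec_cube (c d t z : F) (ht : t ≠ 0) :
    cv (ec c) (ec d) (t ^ 3 * z) = cv (ec c) (ec d) z := by
  rw [cv_scale _ _ _ (pow_ne_zero _ ht)]
  simp only [ec_cube _ _ _ ht]

lemma cv_ec_mul (c d k z : F) (hk : k ≠ 0) :
    cv (ec (k * c)) (ec (k * d)) (k * z) = cv (ec c) (ec d) z := by
  rw [cv_scale _ _ _ hk]
  simp only [ec_mul _ _ _ hk]

lemma cv_ec_zero (c d z : F)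
    (h : ∀ u v, u ≠ 0 → v ≠ 0 → c * u ^ 3 + d * v ^ 3 ≠ z) : cv (ec c) (ec d) z = 0 := by
  unfold cv
  apply Finset.sum_eq_zero
  intro x _
  unfold ec
  split_ifs with h1 h2
  · exfalso
    obtain ⟨h1, u, hu⟩ := h1
    obtain ⟨h2, v, hv⟩ := h2
    refine h u v ?_ ?_ (by rw [← hu, ← hv]; ring)
    · rintro rfl; simp at hu; exact h1 hu
    · rintro rfl; rw [hv] at h2; simp at h2
  all_goals simp

lemma tri (g : F) (hg : ∀ t : F, t ^ 3 ≠ g) (x : F) (hx : x ≠ 0) :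
    ∃ t, t ≠ 0 ∧ (x = t ^ 3 ∨ x = g * t ^ 3 ∨ x = g ^ 2 * t ^ 3) := by
  have g0 : g ≠ 0 := fun h => hg 0 (by simp [h])
  obtain ⟨h, hh⟩ := IsCyclic.exists_generator (α := Fˣ)
  obtain ⟨m, hm⟩ := Subgroup.mem_zpowers_iff.mp (hh (Units.mk0 g g0))
  obtain ⟨n, hn⟩ := Subgroup.mem_zpowers_iff.mp (hh (Units.mk0 x hx))
  have hm' : (h : F) ^ m = g := by simpa using congrArg Units.val hm
  have hn' : (h : F) ^ n = x := by simpa using congrArg Units.val hn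
  have h0 : (h : F) ≠ 0 := h.ne_zero
  have h3 : m % 3 ≠ 0 := by
    intro h3
    apply hg ((h : F) ^ (m / 3))
    rw [← hm', ← zpow_natCast, ← zpow_mul]
    congr 1
    push_cast
    omega
  have key : ∃ M : ℤ, n = 3 * M ∨ n = m + 3 * M ∨ n = 2 * m + 3 * M := by
    have m12 : m % 3 = 1 ∨ m % 3 = 2 := by omega
    have n12 : n % 3 = 0 ∨ n % 3 = 1 ∨ n % 3 = 2 := by omega
    rcases (by rcases m12 with h | h <;> rcases n12 with h' | h' | h' <;> omega : n % 3 = 0 ∨ (n - m) % 3 = 0 ∨ (n - 2 * m) % 3 = 0) with h | h | h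
    · exact ⟨n / 3, by omega⟩
    · exact ⟨(n - m) / 3, by omega⟩
    · exact ⟨(n - 2 * m) / 3, by omega⟩
  obtain ⟨M, hM⟩ := key
  have e3 : ((h : F) ^ M) ^ 3 = (h : F) ^ (3 * M) := by
    rw [← zpow_natCast, ← zpow_mul, mul_comm]; norm_num
  have e2 : g ^ 2 = (h : F) ^ (2 * m) := by
    rw [← hm', ← zpow_natCast, ← zpow_mul, mul_comm]; norm_num
  refine ⟨(h : F) ^ M, zpow_ne_zero _ h0, ?_⟩
  rw [e3, e2, ← hm', ← hn', ← zpow_add₀ h0, ← zpow_add₀ h0]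
  rcases hM with h | h | h
  · left; rw [h]
  · right; left; rw [h]
  · right; right; rw [h]

section vals

lemma g_ne (g : F) (hg : ∀ t : F, t ^ 3 ≠ g) : g ≠ 0 := fun h => hg 0 (by simp [h])

lemma hg2 (g : F) (hg : ∀ t : F, t ^ 3 ≠ g) (t : F) : t ^ 3 ≠ g ^ 2 := by
  intro h
  have g0 := g_ne g hg
  have t0 : t ≠ 0 := by rintro rfl; exact pow_ne_zero 2 g0 (by rw [← h]; simp)
  apply hg (g / t)
  field_simp
  rw [h]

lemma e00 (g : F) (_ : ∀ t : F, t ^ 3 ≠ g) : ec (1 : F) 1 = 1 := by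
  unfold ec; rw [if_pos]; exact ⟨one_ne_zero, 1, by simp⟩
lemma e11 (g : F) (hg : ∀ t : F, t ^ 3 ≠ g) : ec g g = 1 := by
  unfold ec; rw [if_pos]; exact ⟨g_ne g hg, 1, by simp⟩
lemma e22 (g : F) (hg : ∀ t : F, t ^ 3 ≠ g) : ec (g ^ 2) (g ^ 2) = 1 := by
  unfold ec; rw [if_pos]; exact ⟨pow_ne_zero _ (g_ne g hg), 1, by simp⟩
lemma e01 (g : F) (hg : ∀ t : F, t ^ 3 ≠ g) : ec 1 g = 0 := by
  unfold ec; rw [if_neg]; rintro ⟨-, t, ht⟩; exact hg t (by rw [ht]; ring)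
lemma e02 (g : F) (hg : ∀ t : F, t ^ 3 ≠ g) : ec 1 (g ^ 2) = 0 := by
  unfold ec; rw [if_neg]; rintro ⟨-, t, ht⟩; exact hg2 g hg t (by rw [ht]; ring)
lemma e12 (g : F) (hg : ∀ t : F, t ^ 3 ≠ g) : ec g (g ^ 2) = 0 := by
  unfold ec; rw [if_neg]; rintro ⟨-, t, ht⟩
  have g0 := g_ne g hg
  exact hg t (mul_left_cancel₀ g0 (by rw [← ht]; ring))
lemma e10 (g : F) (hg : ∀ t : F, t ^ 3 ≠ g) : ec g 1 = 0 := by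
  unfold ec; rw [if_neg]; rintro ⟨-, t, ht⟩
  have t0 : t ≠ 0 := by rintro rfl; simp at ht
  apply hg (1 / t); field_simp; linear_combination ht
lemma e20 (g : F) (hg : ∀ t : F, t ^ 3 ≠ g) : ec (g ^ 2) 1 = 0 := by
  unfold ec; rw [if_neg]; rintro ⟨-, t, ht⟩
  have t0 : t ≠ 0 := by rintro rfl; simp at ht
  apply hg2 g hg (1 / t); field_simp; linear_combination ht
lemma e21 (g : F) (hg : ∀ t : F, t ^ 3 ≠ g) : ec (g ^ 2) g = 0 := by
  have g0 := g_ne g hg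
  have := e10 g hg
  rw [← ec_mul g g 1 g0] at this
  rw [pow_two]; simpa using this
lemma ez (c : F) : ec c 0 = 0 := by
  unfold ec; simp

lemma expand (g : F) (hg : ∀ t : F, t ^ 3 ≠ g) (P : F → ℤ) (hP : ∀ t z, t ≠ 0 → P (t ^ 3 * z) = P z) (z : F) :
    P z = P 0 * (if z = 0 then 1 else 0) + P 1 * ec 1 z + P g * ec g z
      + P (g ^ 2) * ec (g ^ 2) z := by
  by_cases hz : z = 0
  · subst hz; simp [ez]
  obtain ⟨t, ht, h | h | h⟩ := tri g hg z hz
  · have : z = t ^ 3 * 1 := by rw [h]; ring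
    rw [if_neg hz, this, hP _ _ ht]
    simp only [ec_cube _ _ _ ht, e00 g hg, e10 g hg, e20 g hg]; ring
  · have : z = t ^ 3 * g := by rw [h]; ring
    rw [if_neg hz, this, hP _ _ ht]
    simp only [ec_cube _ _ _ ht, e01 g hg, e11 g hg, e21 g hg]; ring
  · have : z = t ^ 3 * g ^ 2 := by rw [h]; ring
    rw [if_neg hz, this, hP _ _ ht]
    simp only [ec_cube _ _ _ ht, e02 g hg, e12 g hg, e22 g hg]; ring

/-- transport an identity by multiplication with `g` -/
lemma rot (g : F) (hg : ∀ t : F, t ^ 3 ≠ g) (c d : F) (P : F → ℤ) (h : ∀ z, cv (ec c) (ec d) z = P z) (z : F) :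
    cv (ec (g * c)) (ec (g * d)) z = P (z / g) := by
  have g0 := g_ne g hg
  rw [← h, ← cv_ec_mul c d g _ g0, mul_div_cancel₀ _ g0]

lemma ec_div (g : F) (hg : ∀ t : F, t ^ 3 ≠ g) (c z : F) : ec c (z / g) = ec (g * c) z := by
  have g0 := g_ne g hg
  rw [← ec_mul c g _ g0, mul_div_cancel₀ _ g0]

lemma ec_g3 (g : F) (hg : ∀ t : F, t ^ 3 ≠ g) (z : F) : ec (g * g ^ 2) z = ec 1 z := by
  rw [show g * g ^ 2 = g ^ 3 * 1 by ring, ec_cube' _ _ _ (g_ne g hg)]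

lemma case1 (g : F) (hg : ∀ t : F, t ^ 3 ≠ g) : ∃ u v : F, g * u ^ 3 + g ^ 2 * v ^ 3 = 1 := by
  by_contra! H
  have g0 := g_ne g hg
  have z0 : cv (ec g) (ec (g ^ 2)) 0 = 0 := by
    apply cv_ec_zero
    intro u v hu hv h
    apply hg (-u / v)
    field_simp
    apply mul_left_cancel₀ g0
    linear_combination -h
  have z1 : cv (ec g) (ec (g ^ 2)) 1 = 0 := cv_ec_zero _ _ _ (fun u v _ _ => H u v)
  obtain ⟨c, hc⟩ : ∃ c, c = cv (ec g) (ec (g ^ 2)) g := ⟨_, rfl⟩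
  obtain ⟨d, hd⟩ : ∃ d, d = cv (ec g) (ec (g ^ 2)) (g ^ 2) := ⟨_, rfl⟩
  have h12 : ∀ z, cv (ec g) (ec (g ^ 2)) z = c * ec g z + d * ec (g ^ 2) z := by
    intro z
    rw [expand g hg _ (fun t z ht => cv_ec_cube g (g ^ 2) t z ht) z, z0, z1, hc, hd]; ring
  have e3 : ec (g * g ^ 2) = ec 1 := funext (ec_g3 g hg)
  have h20 : ∀ z, cv (ec (g ^ 2)) (ec 1) z = c * ec (g ^ 2) z + d * ec 1 z := by
    intro z
    have := rot g hg _ _ _ h12 z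
    simp only [ec_div g hg, e3, ← pow_two] at this
    exact this
  have h01 : ∀ z, cv (ec 1) (ec g) z = c * ec 1 z + d * ec g z := by
    intro z
    have := rot g hg _ _ _ h20 z
    simp only [ec_div g hg, e3, mul_one] at this
    exact this
  have as := cv_assoc (ec 1) (ec g) (ec (g ^ 2)) 1
  rw [cv_comm (ec 1) (cv _ _)] at as
  rw [show cv (ec 1) (ec g) = _ from funext h01, show cv (ec g) (ec (g ^ 2)) = _ from funext h12,
    cv_lin, cv_lin, cv_comm (ec 1), h20, h12, cv_comm (ec g), h01] at as
  simp only [e00 g hg, e10 g hg, e20 g hg] at as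
  have hc0 : c = 0 := by nlinarith [sq_nonneg (c - d), sq_nonneg c, sq_nonneg d]
  have hd0 : d = 0 := by nlinarith [sq_nonneg (c - d), sq_nonneg c, sq_nonneg d]
  have h1 := h12 (g + g ^ 2)
  rw [hc0, hd0] at h1
  have : ec g g * ec (g ^ 2) (g + g ^ 2 - g) ≤ cv (ec g) (ec (g ^ 2)) (g + g ^ 2) := by
    unfold cv
    exact Finset.single_le_sum (f := fun x => ec g x * ec (g ^ 2) (g + g ^ 2 - x))
      (fun x _ => mul_nonneg (ec_nonneg _ _) (ec_nonneg _ _)) (Finset.mem_univ g)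
  rw [h1, e11 g hg, add_sub_cancel_left, e22 g hg] at this
  norm_num at this

lemma one_eq (g : F) (hg : ∀ t : F, t ^ 3 ≠ g) (z : F) : (1 : ℤ) = (if z = 0 then 1 else 0) + ec 1 z + ec g z + ec (g ^ 2) z := by
  have := expand g hg (fun _ => 1) (fun _ _ _ => rfl) z
  simpa using this

lemma sum_ec (g : F) (hg : ∀ t : F, t ^ 3 ≠ g) (c : F) : ∑ x, ec (g * c) x = ∑ x, ec c x := by
  rw [← Equiv.sum_comp (Equiv.mulLeft₀ g (g_ne g hg))]
  apply Finset.sum_congr rfl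
  intro x _
  simp [ec_mul _ _ _ (g_ne g hg)]

lemma case2 (g : F) (hg : ∀ t : F, t ^ 3 ≠ g) (hq : 7 < Fintype.card F) : ∃ u v : F, g * u ^ 3 + g * v ^ 3 = 1 := by
  by_contra! H
  have g0 := g_ne g hg
  have e3 : ec (g * g ^ 2) = ec 1 := funext (ec_g3 g hg)
  obtain ⟨f, hf⟩ : ∃ f, f = ∑ x, ec g x := ⟨_, rfl⟩
  have hf0 : ∑ x : F, ec 1 x = f := by
    rw [hf]; simpa using (sum_ec g hg 1).symm
  have hf2 : ∑ x, ec (g ^ 2) x = f := by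
    rw [hf, pow_two]; exact sum_ec g hg g
  have hcard : (Fintype.card F : ℤ) = 1 + 3 * f := by
    have : ∑ x : F, (1 : ℤ) = Fintype.card F := by simp
    rw [← this, Finset.sum_congr rfl (fun z _ => one_eq g hg z)]
    simp only [Finset.sum_add_distrib]
    rw [← hf, hf0, hf2]
    simp; ring
  have y1 : cv (ec g) (ec g) 1 = 0 := cv_ec_zero _ _ _ (fun u v _ _ => H u v)
  have z0 : cv (ec g) (ec 1) 0 = 0 := by
    apply cv_ec_zero
    intro u v hu hv h
    apply hg (-v / u)
    field_simp
    linear_combination -h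
  have z1 : cv (ec g) (ec 1) g = 0 := by
    apply cv_ec_zero
    intro u v hu hv h
    apply H (1 / v) (-u / v)
    field_simp
    linear_combination -h
  obtain ⟨b, hb⟩ : ∃ b, b = cv (ec g) (ec g) 0 := ⟨_, rfl⟩
  obtain ⟨c, hc⟩ : ∃ c, c = cv (ec g) (ec g) g := ⟨_, rfl⟩
  obtain ⟨d, hd⟩ : ∃ d, d = cv (ec g) (ec g) (g ^ 2) := ⟨_, rfl⟩
  obtain ⟨t, ht⟩ : ∃ t, t = cv (ec g) (ec 1) 1 := ⟨_, rfl⟩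
  obtain ⟨s, hs⟩ : ∃ s, s = cv (ec g) (ec 1) (g ^ 2) := ⟨_, rfl⟩
  have h11 : ∀ z, cv (ec g) (ec g) z
      = b * (if z = 0 then 1 else 0) + c * ec g z + d * ec (g ^ 2) z := by
    intro z
    rw [expand g hg _ (fun t z ht => cv_ec_cube g g t z ht) z, y1, hb, hc, hd]; ring
  have h10 : ∀ z, cv (ec g) (ec 1) z = s * ec (g ^ 2) z + t * ec 1 z := by
    intro z
    rw [expand g hg _ (fun t z ht => cv_ec_cube g 1 t z ht) z, z0, z1, hs, ht]; ring
  have h21 : ∀ z, cv (ec (g ^ 2)) (ec g) z = s * ec 1 z + t * ec g z := by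
    intro z
    have := rot g hg _ _ _ h10 z
    simp only [ec_div g hg, e3, ← pow_two, mul_one] at this
    exact this
  have h02 : ∀ z, cv (ec 1) (ec (g ^ 2)) z = s * ec g z + t * ec (g ^ 2) z := by
    intro z
    have := rot g hg _ _ _ h21 z
    simp only [ec_div g hg, e3, ← pow_two, mul_one] at this
    exact this
  have h22 : ∀ z, cv (ec (g ^ 2)) (ec (g ^ 2)) z
      = b * (if z = 0 then 1 else 0) + c * ec (g ^ 2) z + d * ec 1 z := by
    intro z
    have := rot g hg _ _ _ h11 z
    simp only [ec_div g hg, e3, ← pow_two, div_eq_zero_iff, g0, or_false] at this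
    exact this
  have h00 : ∀ z, cv (ec 1) (ec 1) z
      = b * (if z = 0 then 1 else 0) + c * ec 1 z + d * ec g z := by
    intro z
    have := rot g hg _ _ _ h22 z
    simp only [ec_div g hg, e3, mul_one, div_eq_zero_iff, g0, or_false] at this
    exact this
  have tot : ∀ z, f = ec g z + cv (ec g) (ec 1) z + cv (ec g) (ec g) z
      + cv (ec g) (ec (g ^ 2)) z := by
    intro z
    have h1 : cv (ec g) (fun x => if x = 0 then 1 else 0) z = ec g z := by
      unfold cv
      simp [sub_eq_zero]
    rw [← h1, hf]
    unfold cv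
    simp only [← Finset.sum_add_distrib, ← mul_add]
    apply Finset.sum_congr rfl
    intro x _
    rw [← one_eq g hg, mul_one]
  have t0 := tot 1
  have t1 := tot g
  have t2 := tot (g ^ 2)
  rw [h10, h11, cv_comm, h21] at t0 t1 t2
  simp only [e00 g hg, e10 g hg, e20 g hg, e01 g hg, e11 g hg, e21 g hg, e02 g hg, e12 g hg,
    e22 g hg, g0, one_ne_zero, pow_eq_zero_iff, ne_eq, OfNat.ofNat_ne_zero, not_false_eq_true,
    if_false] at t0 t1 t2
  have as := cv_assoc (ec 1) (ec g) (ec (g ^ 2)) 1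
  rw [cv_comm (ec 1) (cv _ _)] at as
  rw [show cv (ec 1) (ec g) = _ from funext (fun z => (cv_comm _ _ z).trans (h10 z)),
    show cv (ec g) (ec (g ^ 2)) = _ from funext (fun z => (cv_comm _ _ z).trans (h21 z)),
    cv_lin, cv_lin, h22, h02, h00, h10] at as
  simp only [e00 g hg, e10 g hg, e20 g hg, one_ne_zero, if_false] at as
  have hq' : (7 : ℤ) < Fintype.card F := by exact_mod_cast hq
  have hd' : d = t := by linarith
  have hc' : c = s - 1 := by linarith
  subst hd' hc'
  have hs0 : 0 ≤ s := by nlinarith [sq_nonneg (2 * d - s), sq_nonneg s]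
  have hs1 : s ≤ 1 := by nlinarith [sq_nonneg (2 * d - s), sq_nonneg s]
  have hd1 : d ≤ 1 := by
    interval_cases s <;> nlinarith
  linarith

end vals

lemma diag (hq : 7 < Fintype.card F) (A B a : F) (hA : A ≠ 0) (hB : B ≠ 0) (ha : a ≠ 0) :
    ∃ u v : F, A * u ^ 3 + B * v ^ 3 = a := by
  by_cases h1 : ∃ t : F, t ^ 3 = A / a
  · obtain ⟨t, ht⟩ := h1
    have t0 : t ≠ 0 := by
      rintro rfl
      exact div_ne_zero hA ha (by rw [← ht]; simp)
    refine ⟨1 / t, 0, ?_⟩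
    rw [div_pow, ht]; field_simp; simp
  push Not at h1
  obtain ⟨t, t0, h | h | h⟩ := tri (A / a) h1 (B / a) (div_ne_zero hB ha)
  · refine ⟨0, 1 / t, ?_⟩
    rw [div_pow, ← h]; field_simp; simp
  · obtain ⟨u, v, huv⟩ := case2 (A / a) h1 hq
    refine ⟨u, v / t, ?_⟩
    have : B = a * (A / a * t ^ 3) := by rw [← h]; field_simp
    rw [this]
    field_simp at huv ⊢
    linear_combination huv
  · obtain ⟨u, v, huv⟩ := case1 (A / a) h1
    refine ⟨u, v / t, ?_⟩
    have : B = a * ((A / a) ^ 2 * t ^ 3) := by rw [← h]; field_simp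
    rw [this]
    field_simp at huv ⊢
    linear_combination huv

lemma main_aux (hq : 7 < Fintype.card F) (h3 : (3 : F) ≠ 0) (a : F) (ha : a ≠ 0) :
    ∃ α β : F, (α + β)^3 - 9*α*β^2 = a := by
  by_cases hs : Function.Surjective (fun x : F => x ^ 3)
  · obtain ⟨t, ht⟩ := hs a
    exact ⟨t, 0, by simpa using ht⟩
  have hi : ¬ Function.Injective (fun x : F => x ^ 3) :=
    fun h => hs (Finite.surjective_of_injective h)
  obtain ⟨w, hw⟩ : ∃ w : F, w ^ 2 + w + 1 = 0 := by
    simp only [Function.Injective] at hi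
    push Not at hi
    obtain ⟨x, y, hxy, hne⟩ := hi
    have y0 : y ≠ 0 := by
      rintro rfl
      apply hne
      simpa using hxy
    refine ⟨x / y, ?_⟩
    field_simp
    apply mul_left_cancel₀ (sub_ne_zero.mpr hne)
    linear_combination hxy
  have hr : (1 + 2 * w) ≠ 0 := by
    intro h
    apply h3
    linear_combination 4 * hw - (1 + 2 * w) * h
  have hA : w - 1 ≠ 0 := by
    intro h
    apply h3
    linear_combination hw - (w + 2) * h
  have hB : w + 2 ≠ 0 := by
    intro h
    apply h3
    linear_combination hw - (w - 1) * h
  obtain ⟨u, v, huv⟩ := diag hq ((w - 1) / (1 + 2 * w)) ((w + 2) / (1 + 2 * w)) a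
    (div_ne_zero hA hr) (div_ne_zero hB hr) ha
  -- u = y - (2+w) z, v = y - (1-w) z
  obtain ⟨z, hz⟩ : ∃ z, z = (v - u) / (1 + 2 * w) := ⟨_, rfl⟩
  obtain ⟨y, hy⟩ : ∃ y, y = u + (2 + w) * z := ⟨_, rfl⟩
  have hz' : z * (1 + 2 * w) = v - u := by rw [hz]; field_simp
  have hu : u = y - (2 + w) * z := by rw [hy]; ring
  have hv : v = y - (1 - w) * z := by linear_combination hu - hz'
  refine ⟨y - z, z, ?_⟩
  have huv' : (w - 1) * u ^ 3 + (w + 2) * v ^ 3 = a * (1 + 2 * w) := by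
    have i1 := div_mul_cancel₀ (w - 1) hr
    have i2 := div_mul_cancel₀ (w + 2) hr
    linear_combination (1 + 2 * w) * huv - u ^ 3 * i1 - v ^ 3 * i2
  apply mul_right_cancel₀ hr
  rw [← huv', hu, hv]
  linear_combination (-(1 + 2 * w) * 3 * z ^ 2 * (y - z)) * hw

end helpers

theorem stmt_6 (q : ℕ) (hq : q.Prime) (hq3 : 3 < q) (a : ZMod q) (ha : a ≠ 0) :
    ∃ α β : ZMod q, (α + β)^3 - 9*α*β^2 = a := by
  have : Fact q.Prime := ⟨hq⟩
  by_cases h7 : 7 < q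
  · apply main_aux (by rw [ZMod.card]; exact h7) _ a ha
    intro h
    have h' : ((3 : ℕ) : ZMod q) = 0 := by exact_mod_cast h
    rw [ZMod.natCast_eq_zero_iff] at h'
    have := Nat.le_of_dvd (by norm_num) h'
    omega
  · have : q = 4 ∨ q = 5 ∨ q = 6 ∨ q = 7 := by omega
    rcases this with rfl | rfl | rfl | rfl
    · norm_num at hq
    · clear ha; revert a; decide
    · norm_num at hq
    · clear ha; revert a; decide
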